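/- arXiv:1306.1994 — 2 statements merged into one kernel-verified Lean document; each statement's English description precedes it below -/
import Mathlib

section
/- Let F be a field, A a commutative associative F-algebra, ω : A → A an involution, and Δ : A → A a derivation satisfying ω∘Δ + Δ∘ω = 0. Then the trilinear bracket [a,b,c]_{ω,Δ} := ω(a)(bΔ(c) − cΔ(b)) + ω(b)(cΔ(a) − aΔ(c)) + ω(c)(aΔ(b) − bΔ(a)) is skew-symmetric and satisfies the fundamental identity [[a,b,c]_{ω,Δ},d,e]_{ω,Δ} = [[a,d,e]_{ω,Δ},b,c]_{ω,Δ} + [a,[b,d,e]_{ω,Δ},c]_{ω,Δ} + [a,b,[c,d,e]_{ω,Δ}]_{ω,Δ} for all a,b,c,d,e ∈ A; hence (A, [·,·,·]_{ω,Δ}) is a 3-Lie algebra. -/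
/-!
The bracket is the determinant of the matrix whose columns are `(ω a, a, Δ a)`, one for each
argument; this gives skew-symmetry. Expanding along the first column, `L = [·, d, e]` has the form
`p ω + q + r Δ` with `ω r = -r` and `ω q + q + Δ r = 0`, and the fundamental identity says that any
such `L` satisfies the Leibniz rule on the bracket. If `M` is the matrix of the bracket, applying
`L` to the arguments replaces `M` by `N M + r Δ(M) + p K`, where `K` has `Δ ∘ ω` in its last row and
zeros elsewhere. Replacing one column of `M` at a time and summing the determinants gives
`tr (adj M · (N M + r Δ(M) + p K)) = tr N · det M + r Δ(det M) + p ω(det M)`, and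
`tr N = 2 q + ω q + Δ r = q`. The last term arises because `ω` exchanges the first two rows of `M`
and turns the third into `-Δ ∘ ω`, so that `ω (det M)` is `det M` with its last row replaced by
`Δ ∘ ω`.
-/

open Matrix

section Determinant

variable {R A M ι : Type*} [DecidableEq ι]

theorem derivation_prod [CommSemiring R] [CommSemiring A] [Algebra R A] [AddCommMonoid M]
    [Module R M] [Module A M] (D : Derivation R A M) (s : Finset ι) (f : ι → A) :
    D (∏ i ∈ s, f i) = ∑ i ∈ s, (∏ j ∈ s.erase i, f j) • D (f i) := by
  induction s using Finset.induction_on with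
  | empty => simp
  | insert k s hk ih =>
    have erase_insert_prod : ∀ i ∈ s,
        ∏ j ∈ (insert k s).erase i, f j = f k * ∏ j ∈ s.erase i, f j := fun i hi => by
      rw [Finset.erase_insert_of_ne (ne_of_mem_of_not_mem hi hk).symm,
        Finset.prod_insert fun h => hk (Finset.mem_of_mem_erase h)]
    rw [Finset.prod_insert hk, D.leibniz, ih, Finset.sum_insert hk, Finset.erase_insert hk,
      Finset.smul_sum, add_comm]
    congr 1
    exact Finset.sum_congr rfl fun i hi => by rw [erase_insert_prod i hi, mul_smul]

variable [Fintype ι] [CommRing A]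

theorem sum_det_updateCol_col (X Y : Matrix ι ι A) :
    ∑ j, (X.updateCol j (Y.col j)).det = trace (X.adjugate * Y) := by
  simp only [← cramer_apply, cramer_eq_adjugate_mulVec]
  rfl

theorem det_updateRow_eq_trace (X : Matrix ι ι A) (i : ι) (v : ι → A) :
    (X.updateRow i v).det = trace (X.adjugate * updateRow 0 i v) := by
  rw [← cramer_transpose_apply, cramer_eq_adjugate_mulVec, ← adjugate_transpose, trace_mul_comm,
    updateRow_mul]
  simp [trace, updateRow_apply, mulVec, vecMul, dotProduct, mul_comm]

theorem trace_adjugate_mul_mul_self (X Y : Matrix ι ι A) :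
    trace (X.adjugate * (Y * X)) = trace Y * X.det := by
  rw [trace_mul_comm, Matrix.mul_assoc, mul_adjugate, Matrix.mul_smul, Matrix.mul_one, trace_smul,
    smul_eq_mul, mul_comm]

theorem derivation_det [CommSemiring R] [Algebra R A] (D : Derivation R A A) (X : Matrix ι ι A) :
    D X.det = trace (X.adjugate * X.map D) := by
  have updateCol_prod (σ : Equiv.Perm ι) (j : ι) :
      ∏ i, X.updateCol j ((X.map D).col j) (σ i) i =
        (∏ i ∈ Finset.univ.erase j, X (σ i) i) * D (X (σ j) j) := by
    rw [← Finset.prod_erase_mul _ _ (Finset.mem_univ j), updateCol_self]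
    congr 1
    exact Finset.prod_congr rfl fun i hi => updateCol_ne (Finset.ne_of_mem_erase hi)
  rw [← sum_det_updateCol_col]
  simp only [det_apply, updateCol_prod, map_sum, Units.smul_def, map_zsmul, derivation_prod,
    smul_eq_mul, Finset.smul_sum]
  exact Finset.sum_comm

end Determinant

section TwistedBracket

variable {R A : Type*} [CommSemiring R] [CommRing A] [Algebra R A]

/-- The matrix whose `j`-th column is `(ω (x j), x j, D (x j))`; its determinant is the
bracket of `x`. -/
def twistedMatrix (ω : A →+* A) (D : Derivation R A A) (x : Fin 3 → A) : Matrix (Fin 3) (Fin 3) A :=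
  of ![ω ∘ x, x, D ∘ x]

/-- The ternary bracket `[x₀, x₁, x₂]_{ω,D}`, in determinantal form and with its three arguments
collected in a family `x`. -/
def twistedBracket (ω : A →+* A) (D : Derivation R A A) (x : Fin 3 → A) : A :=
  (twistedMatrix ω D x).det

variable (ω : A →+* A) (D : Derivation R A A)

theorem twistedBracket_apply (a b c : A) :
    twistedBracket ω D ![a, b, c] =
      ω a * (b * D c - c * D b) + ω b * (c * D a - a * D c) + ω c * (a * D b - b * D a) := by
  simp only [twistedBracket, twistedMatrix, det_fin_three, of_apply, cons_val, Function.comp_apply]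
  ring

theorem twistedBracket_comp_swap (x : Fin 3 → A) {i j : Fin 3} (hij : i ≠ j) :
    twistedBracket ω D (x ∘ Equiv.swap i j) = -twistedBracket ω D x := by
  have columns_swapped : twistedMatrix ω D (x ∘ Equiv.swap i j) =
      (twistedMatrix ω D x).submatrix id (Equiv.swap i j) := by
    ext k l
    fin_cases k <;> rfl
  rw [twistedBracket, columns_swapped, det_permute', Equiv.Perm.sign_swap hij]
  simp [twistedBracket]

theorem twistedMatrix_update (x : Fin 3 → A) (j : Fin 3) (a : A) :
    twistedMatrix ω D (Function.update x j a) =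
      (twistedMatrix ω D x).updateCol j ![ω a, a, D a] := by
  ext k l
  rcases eq_or_ne l j with rfl | hl
  · fin_cases k <;> simp [twistedMatrix]
  · fin_cases k <;> simp [twistedMatrix, hl]

variable {ω D}

theorem map_twistedBracket (hω : Function.Involutive ω) (hanti : ∀ a, ω (D a) = -D (ω a))
    (x : Fin 3 → A) :
    ω (twistedBracket ω D x) = ((twistedMatrix ω D x).updateRow 2 (D ∘ ω ∘ x)).det := by
  have updated_rows : (twistedMatrix ω D x).updateRow 2 (D ∘ ω ∘ x) =
      of ![ω ∘ x, x, D ∘ ω ∘ x] := by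
    ext k l
    fin_cases k <;> rfl
  rw [updated_rows]
  simp only [twistedBracket, twistedMatrix, det_fin_three, of_apply, cons_val, Function.comp_apply,
    map_add, map_sub, map_mul, hω _, hanti]
  ring

theorem twistedMatrix_comp (hω : Function.Involutive ω) (hanti : ∀ a, ω (D a) = -D (ω a))
    {p q r : A} (hr : ω r = -r) (x : Fin 3 → A) :
    twistedMatrix ω D (fun j => p * ω (x j) + q * x j + r * D (x j)) =
      !![ω q, ω p, 0; p, q, 0; D p, D q, q + D r] * twistedMatrix ω D x +
        r • (twistedMatrix ω D x).map D + p • updateRow 0 2 (D ∘ ω ∘ x) := by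
  ext k l
  rw [Matrix.add_apply, Matrix.add_apply, mul_apply, Fin.sum_univ_three]
  set a := x l
  fin_cases k
  · change ω (p * ω a + q * a + r * D a) =
      ω q * ω a + ω p * a + 0 * D a + r * D (ω a) + p * 0
    simp only [map_add, map_mul, hω _, hanti, hr]
    ring
  · change p * ω a + q * a + r * D a = p * ω a + q * a + 0 * D a + r * D a + p * 0
    ring
  · change D (p * ω a + q * a + r * D a) =
      D p * ω a + D q * a + (q + D r) * D a + r * D (D a) + p * D (ω a)
    simp only [map_add, D.leibniz, smul_eq_mul]
    ring

theorem sum_twistedBracket_update (hω : Function.Involutive ω) (hanti : ∀ a, ω (D a) = -D (ω a))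
    {p q r : A} (hr : ω r = -r) (hq : ω q + q + D r = 0) (x : Fin 3 → A) :
    ∑ j, twistedBracket ω D (Function.update x j (p * ω (x j) + q * x j + r * D (x j))) =
      p * ω (twistedBracket ω D x) + q * twistedBracket ω D x + r * D (twistedBracket ω D x) := by
  set X := twistedMatrix ω D x with hX
  set L : A → A := fun a => p * ω a + q * a + r * D a
  set N : Matrix (Fin 3) (Fin 3) A := !![ω q, ω p, 0; p, q, 0; D p, D q, q + D r] with hN
  have trace_N : trace N = q := by
    rw [hN, trace_fin_three_of]
    linear_combination hq
  calc ∑ j, twistedBracket ω D (Function.update x j (L (x j)))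
      = ∑ j, (X.updateCol j ((twistedMatrix ω D (L ∘ x)).col j)).det := by
        refine Finset.sum_congr rfl fun j _ => ?_
        rw [twistedBracket, twistedMatrix_update]
        congr 2
        ext k
        fin_cases k <;> rfl
    _ = trace (X.adjugate * (N * X + r • X.map D + p • updateRow 0 2 (D ∘ ω ∘ x))) := by
        rw [sum_det_updateCol_col, ← twistedMatrix_comp hω hanti hr]
        rfl
    _ = q * X.det + r * D X.det + p * (X.updateRow 2 (D ∘ ω ∘ x)).det := by
        rw [Matrix.mul_add, Matrix.mul_add, trace_add, trace_add, trace_adjugate_mul_mul_self,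
          trace_N, Matrix.mul_smul, Matrix.mul_smul, trace_smul, trace_smul, ← derivation_det,
          ← det_updateRow_eq_trace, smul_eq_mul, smul_eq_mul]
    _ = p * ω (twistedBracket ω D x) + q * twistedBracket ω D x + r * D (twistedBracket ω D x) := by
        rw [map_twistedBracket hω hanti, twistedBracket, ← hX]
        ring

theorem twistedBracket_fundamental_identity (hω : Function.Involutive ω)
    (hanti : ∀ a, ω (D a) = -D (ω a)) (x : Fin 3 → A) (d e : A) :
    twistedBracket ω D ![twistedBracket ω D x, d, e] =
      ∑ j, twistedBracket ω D (Function.update x j (twistedBracket ω D ![x j, d, e])) := by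
  let p := d * D e - e * D d
  let q := ω e * D d - ω d * D e
  let r := ω d * e - ω e * d
  have column_expansion (a : A) : twistedBracket ω D ![a, d, e] = p * ω a + q * a + r * D a := by
    rw [twistedBracket_apply]
    ring
  have hr : ω r = -r := by
    simp only [r, map_sub, map_mul, hω _]
    ring
  have hq : ω q + q + D r = 0 := by
    simp only [q, r, map_sub, map_mul, hω _, hanti, D.leibniz, smul_eq_mul]
    ring
  simp only [column_expansion]
  exact (sum_twistedBracket_update hω hanti hr hq x).symm

end TwistedBracket

theorem stmt_5_general {A : Type*} [CommRing A]
    (ω : A →+ A) (hωmul : ∀ a b : A, ω (a * b) = ω a * ω b) (hωinv : ∀ a : A, ω (ω a) = a)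
    (Δ : A →+ A) (hΔ : ∀ a b : A, Δ (a * b) = Δ a * b + a * Δ b)
    (hanti : ∀ a : A, ω (Δ a) + Δ (ω a) = 0)
    (br : A → A → A → A)
    (hbr : ∀ a b c : A, br a b c =
      ω a * (b * Δ c - c * Δ b) + ω b * (c * Δ a - a * Δ c) + ω c * (a * Δ b - b * Δ a)) :
    ((∀ a b c : A, br b a c = - br a b c) ∧
     (∀ a b c : A, br a c b = - br a b c) ∧
     (∀ a b c : A, br c b a = - br a b c)) ∧
    (∀ a b c d e : A,
      br (br a b c) d e =
        br (br a d e) b c + br a (br b d e) c + br a b (br c d e)) := by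
  have ω_one : ω 1 = 1 := by
    simpa only [hωinv, one_mul, mul_one] using (hωmul (ω 1) 1).symm
  let σ : A →+* A := { ω with map_one' := ω_one, map_mul' := hωmul }
  let D : Derivation ℤ A A := Derivation.mk' Δ.toIntLinearMap fun a b => by
    simp [hΔ, mul_comm, add_comm]
  have br_eq (a b c : A) : br a b c = twistedBracket σ D ![a, b, c] :=
    (hbr a b c).trans (twistedBracket_apply σ D a b c).symm
  have hσD (a : A) : σ (D a) = -D (σ a) := eq_neg_of_add_eq_zero_left (hanti a)
  simp only [br_eq]
  refine ⟨⟨fun a b c => ?_, fun a b c => ?_, fun a b c => ?_⟩, fun a b c d e => ?_⟩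
  · rw [← twistedBracket_comp_swap σ D _ (show (0 : Fin 3) ≠ 1 by decide)]
    exact congrArg _ (by ext k; fin_cases k <;> rfl)
  · rw [← twistedBracket_comp_swap σ D _ (show (1 : Fin 3) ≠ 2 by decide)]
    exact congrArg _ (by ext k; fin_cases k <;> rfl)
  · rw [← twistedBracket_comp_swap σ D _ (show (0 : Fin 3) ≠ 2 by decide)]
    exact congrArg _ (by ext k; fin_cases k <;> rfl)
  · rw [twistedBracket_fundamental_identity (ω := σ) hωinv hσD, Fin.sum_univ_three]
    refine congrArg₂ _ (congrArg₂ _ ?_ ?_) ?_ <;>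
      exact congrArg _ (by ext k; fin_cases k <;> rfl)

/-- `ω` involution, `Δ` derivation with `ω∘Δ + Δ∘ω = 0`. The trilinear
bracket `[a,b,c]_{ω,Δ} = ω(a)(bΔ(c) − cΔ(b)) + ω(b)(cΔ(a) − aΔ(c)) + ω(c)(aΔ(b) − bΔ(a))`
is skew-symmetric and satisfies the fundamental identity; hence `(A, [·,·,·]_{ω,Δ})` is a
3-Lie algebra. -/
theorem stmt_5 (F : Type*) [Field F] (A : Type*) [CommRing A] [Algebra F A]
    (ω : A →ₗ[F] A) (hωmul : ∀ a b : A, ω (a * b) = ω a * ω b)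
    (hωinv : ∀ a : A, ω (ω a) = a)
    (Δ : A →ₗ[F] A) (hΔ : ∀ a b : A, Δ (a * b) = Δ a * b + a * Δ b)
    (hanti : ∀ a : A, ω (Δ a) + Δ (ω a) = 0)
    (br : A → A → A → A)
    (hbr : ∀ a b c : A, br a b c =
      ω a * (b * Δ c - c * Δ b) + ω b * (c * Δ a - a * Δ c) + ω c * (a * Δ b - b * Δ a)) :
    ((∀ a b c : A, br b a c = - br a b c) ∧
     (∀ a b c : A, br a c b = - br a b c) ∧
     (∀ a b c : A, br c b a = - br a b c)) ∧
    (∀ a b c d e : A,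
      br (br a b c) d e =
        br (br a d e) b c + br a (br b d e) c + br a b (br c d e)) :=
  stmt_5_general ω.toAddMonoidHom hωmul hωinv Δ.toAddMonoidHom hΔ hanti br hbr
end

section
/- Let F be a field with char F ≠ 2, A = F[t, t⁻¹] the algebra of Laurent polynomials over F, and λ, μ ∈ F with μ ≠ 0 and μ² = λ. Let [·,·,·]_{ω_λ,δ} be the trilinear bracket on A determined on monomials by [t^l, t^m, t^n]_{ω_λ,δ} = λ^l(n−m)·t^{m+n−l} + λ^m(l−n)·t^{n+l−m} + λ^n(m−l)·t^{l+m−n}, and let [·,·,·]_{ω_1,δ} be the bracket for λ = 1, i.e., [t^l, t^m, t^n]_{ω_1,δ} = (n−m)·t^{m+n−l} + (l−n)·t^{n+l−m} + (m−l)·t^{l+m−n}. Then the F-linear map σ : A → A determined by σ(t^m) = μ^m·t^m is a bijection satisfying σ([x,y,z]_{ω_λ,δ}) = [σ(x), σ(y), σ(z)]_{ω_1,δ} for all x, y, z ∈ A; hence the 3-Lie algebras (A, [·,·,·]_{ω_λ,δ}) and (A, [·,·,·]_{ω_1,δ}) are isomorphic. -/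
open LaurentPolynomial

/-!
The bracket `[x, y, z]_{ω, δ}` is the determinant of the matrix with rows `(ω x, ω y, ω z)`,
`(x, y, z)` and `(δ x, δ y, δ z)`, where `ω_λ(t^m) = λ^m t^(-m)` and `δ(t^m) = m t^m`. A ring
homomorphism commutes with determinants, so it preserves such brackets as soon as it intertwines
the `ω`s and the `δ`s. The scaling `σ : t ↦ μ t` is an algebra automorphism; it commutes with `δ`,
and `σ ∘ ω_{μ²} = ω_1 ∘ σ`, since both sides send `t^m` to `μ^m t^(-m)`.
-/

section DetBracket

variable {R A : Type*} [CommRing R] [CommRing A] [Algebra R A]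

/-- The ternary bracket `[x, y, z]_{ω, δ}` attached to two linear endomorphisms `ω` and `δ` of a
commutative algebra: the determinant of the matrix with rows `(ω x, ω y, ω z)`, `(x, y, z)` and
`(δ x, δ y, δ z)`, encoded by its expansion along the last column so as to be linear in `z` by
construction. -/
def detBracket (ω δ : A →ₗ[R] A) : A →ₗ[R] A →ₗ[R] A →ₗ[R] A :=
  LinearMap.mk₂ R
    (fun x y => LinearMap.mulLeft R (x * δ y - y * δ x) ∘ₗ ω -
      LinearMap.mulLeft R (ω x * δ y - ω y * δ x) +
      LinearMap.mulLeft R (ω x * y - ω y * x) ∘ₗ δ)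
    (fun _ _ _ => by
      ext
      simp only [map_add, LinearMap.add_apply, LinearMap.sub_apply, LinearMap.comp_apply,
        LinearMap.mulLeft_apply]
      ring)
    (fun _ _ _ => by ext; simp [smul_sub, smul_add, sub_mul])
    (fun _ _ _ => by
      ext
      simp only [map_add, LinearMap.add_apply, LinearMap.sub_apply, LinearMap.comp_apply,
        LinearMap.mulLeft_apply]
      ring)
    (fun _ _ _ => by ext; simp [smul_sub, smul_add, sub_mul])

theorem detBracket_apply (ω δ : A →ₗ[R] A) (x y z : A) :
    detBracket ω δ x y z =
      ω x * (y * δ z - z * δ y) + ω y * (z * δ x - x * δ z) + ω z * (x * δ y - y * δ x) := by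
  simp only [detBracket, LinearMap.mk₂_apply, LinearMap.add_apply, LinearMap.sub_apply,
    LinearMap.comp_apply, LinearMap.mulLeft_apply]
  ring

theorem map_detBracket {S B : Type*} [CommRing S] [CommRing B] [Algebra S B] (φ : A →+* B)
    {ω δ : A →ₗ[R] A} {ω' δ' : B →ₗ[S] B}
    (hω : ∀ x, φ (ω x) = ω' (φ x)) (hδ : ∀ x, φ (δ x) = δ' (φ x)) (x y z : A) :
    φ (detBracket ω δ x y z) = detBracket ω' δ' (φ x) (φ y) (φ z) := by
  simp only [detBracket_apply, map_add, map_sub, map_mul, hω, hδ]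

end DetBracket

section Laurent

variable {R : Type*}

theorem linearMap_ext_T [Semiring R] {M : Type*} [AddCommMonoid M] [Module R M]
    {f g : R[T;T⁻¹] →ₗ[R] M} (h : ∀ n : ℤ, f (T n) = g (T n)) : f = g :=
  (AddMonoidAlgebra.basis ℤ R).ext h

theorem trilinearMap_ext_T [CommSemiring R] {M : Type*} [AddCommMonoid M] [Module R M]
    {f g : R[T;T⁻¹] →ₗ[R] R[T;T⁻¹] →ₗ[R] R[T;T⁻¹] →ₗ[R] M}
    (h : ∀ l m n : ℤ, f (T l) (T m) (T n) = g (T l) (T m) (T n)) : f = g :=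
  linearMap_ext_T fun l => linearMap_ext_T fun m => linearMap_ext_T fun n => h l m n

section Scaling

variable [CommSemiring R]

/-- The substitution `t ↦ u t`, as an algebra endomorphism of the Laurent polynomials. -/
noncomputable def scaleHom (u : Rˣ) : R[T;T⁻¹] →ₐ[R] R[T;T⁻¹] :=
  AddMonoidAlgebra.lift R R[T;T⁻¹] ℤ
    { toFun := fun n => (↑(u ^ n.toAdd) : R) • T n.toAdd
      map_one' := by simp
      map_mul' := fun m n => by
        simp only [toAdd_mul, zpow_add, Units.val_mul, T_add, smul_mul_smul_comm] }

@[simp]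
theorem scaleHom_T (u : Rˣ) (n : ℤ) :
    scaleHom u (T n) = (↑(u ^ n) : R) • (T n : R[T;T⁻¹]) :=
  (AddMonoidAlgebra.lift_single ..).trans (one_smul R _)

theorem scaleHom_one : scaleHom (1 : Rˣ) = AlgHom.id R R[T;T⁻¹] :=
  AlgHom.toLinearMap_injective <| linearMap_ext_T fun n => by simp

theorem scaleHom_comp_scaleHom (u v : Rˣ) :
    (scaleHom u).comp (scaleHom v) = scaleHom (u * v) :=
  AlgHom.toLinearMap_injective <| linearMap_ext_T fun n => by
    simp [smul_smul, mul_zpow, mul_comm]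

theorem scaleHom_bijective (u : Rˣ) : Function.Bijective (scaleHom u) := by
  refine Function.bijective_iff_has_inverse.mpr ⟨scaleHom u⁻¹, fun x => ?_, fun x => ?_⟩
  · rw [← AlgHom.comp_apply, scaleHom_comp_scaleHom, inv_mul_cancel, scaleHom_one, AlgHom.id_apply]
  · rw [← AlgHom.comp_apply, scaleHom_comp_scaleHom, mul_inv_cancel, scaleHom_one, AlgHom.id_apply]

/-- The endomorphism `ω_λ` of the Laurent polynomials, the substitution `t ↦ λ t⁻¹`. -/
noncomputable def omega (lam : Rˣ) : R[T;T⁻¹] →ₗ[R] R[T;T⁻¹] :=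
  (invert.toAlgHom.comp (scaleHom lam)).toLinearMap

@[simp]
theorem omega_T (lam : Rˣ) (n : ℤ) :
    omega lam (T n) = (↑(lam ^ n) : R) • (T (-n) : R[T;T⁻¹]) := by
  simp [omega]

theorem scaleHom_omega (μ κ : Rˣ) (x : R[T;T⁻¹]) :
    scaleHom μ (omega (μ ^ 2 * κ) x) = omega κ (scaleHom μ x) := by
  suffices (scaleHom μ).toLinearMap ∘ₗ omega (μ ^ 2 * κ) = omega κ ∘ₗ (scaleHom μ).toLinearMap from
    LinearMap.congr_fun this x
  refine linearMap_ext_T fun n => ?_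
  have coeff_eq : (μ ^ 2 * κ) ^ n * μ ^ (-n) = μ ^ n * κ ^ n := by
    rw [mul_zpow, sq, mul_zpow, mul_right_comm, zpow_neg, mul_inv_cancel_right]
  simp only [LinearMap.comp_apply, AlgHom.toLinearMap_apply, omega_T, scaleHom_T, map_smul,
    smul_smul, ← Units.val_mul, coeff_eq]

end Scaling

section Bracket

variable [CommRing R]

/-- The Euler derivation `δ = t d/dt` of the Laurent polynomials, as a linear map. -/
noncomputable def eulerMap (R : Type*) [CommRing R] : R[T;T⁻¹] →ₗ[R] R[T;T⁻¹] :=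
  (AddMonoidAlgebra.basis ℤ R).constr R fun n => (n : R) • T n

@[simp]
theorem eulerMap_T (n : ℤ) : eulerMap R (T n) = (n : R) • T n :=
  (AddMonoidAlgebra.basis ℤ R).constr_basis R _ n

theorem scaleHom_eulerMap (u : Rˣ) (x : R[T;T⁻¹]) :
    scaleHom u (eulerMap R x) = eulerMap R (scaleHom u x) := by
  suffices (scaleHom u).toLinearMap ∘ₗ eulerMap R = eulerMap R ∘ₗ (scaleHom u).toLinearMap from
    LinearMap.congr_fun this x
  refine linearMap_ext_T fun n => ?_
  simp only [LinearMap.comp_apply, AlgHom.toLinearMap_apply, eulerMap_T, scaleHom_T, map_smul,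
    smul_comm (n : R)]

/-- The bracket `[x, y, z]_{ω_λ, δ}` on the Laurent polynomials. -/
noncomputable def laurentBracket (lam : Rˣ) :
    R[T;T⁻¹] →ₗ[R] R[T;T⁻¹] →ₗ[R] R[T;T⁻¹] →ₗ[R] R[T;T⁻¹] :=
  detBracket (omega lam) (eulerMap R)

theorem laurentBracket_T (lam : Rˣ) (l m n : ℤ) :
    laurentBracket lam (T l) (T m) (T n) =
      (↑(lam ^ l) * ((n : R) - (m : R))) • (T (m + n - l) : R[T;T⁻¹]) +
      (↑(lam ^ m) * ((l : R) - (n : R))) • (T (n + l - m) : R[T;T⁻¹]) +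
      (↑(lam ^ n) * ((m : R) - (l : R))) • (T (l + m - n) : R[T;T⁻¹]) := by
  simp only [laurentBracket, detBracket_apply, omega_T, eulerMap_T, T_sub, T_add, smul_eq_C_mul,
    map_mul, map_sub]
  ring

theorem scaleHom_laurentBracket (μ κ : Rˣ) (x y z : R[T;T⁻¹]) :
    scaleHom μ (laurentBracket (μ ^ 2 * κ) x y z) =
      laurentBracket κ (scaleHom μ x) (scaleHom μ y) (scaleHom μ z) :=
  map_detBracket (scaleHom μ).toRingHom (scaleHom_omega μ κ) (scaleHom_eulerMap μ) x y z

end Bracket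

end Laurent

theorem stmt_15_general {R : Type*} [CommRing R] (μ : Rˣ)
    (f : R[T;T⁻¹] →ₗ[R] R[T;T⁻¹] →ₗ[R] R[T;T⁻¹] →ₗ[R] R[T;T⁻¹])
    (hf : ∀ l m n : ℤ, f (T l) (T m) (T n) =
      (↑((μ ^ 2) ^ l) * ((n : R) - (m : R))) • (T (m + n - l) : R[T;T⁻¹]) +
      (↑((μ ^ 2) ^ m) * ((l : R) - (n : R))) • (T (n + l - m) : R[T;T⁻¹]) +
      (↑((μ ^ 2) ^ n) * ((m : R) - (l : R))) • (T (l + m - n) : R[T;T⁻¹]))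
    (g : R[T;T⁻¹] →ₗ[R] R[T;T⁻¹] →ₗ[R] R[T;T⁻¹] →ₗ[R] R[T;T⁻¹])
    (hg : ∀ l m n : ℤ, g (T l) (T m) (T n) =
      ((n : R) - (m : R)) • (T (m + n - l) : R[T;T⁻¹]) +
      ((l : R) - (n : R)) • (T (n + l - m) : R[T;T⁻¹]) +
      ((m : R) - (l : R)) • (T (l + m - n) : R[T;T⁻¹]))
    (σ : R[T;T⁻¹] →ₗ[R] R[T;T⁻¹])
    (hσ : ∀ m : ℤ, σ (T m) = (↑(μ ^ m) : R) • (T m : R[T;T⁻¹])) :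
    Function.Bijective σ ∧ ∀ x y z : R[T;T⁻¹], σ (f x y z) = g (σ x) (σ y) (σ z) := by
  obtain rfl : σ = (scaleHom μ).toLinearMap :=
    linearMap_ext_T fun m => (hσ m).trans (scaleHom_T μ m).symm
  obtain rfl : f = laurentBracket (μ ^ 2) :=
    trilinearMap_ext_T fun l m n => (hf l m n).trans (laurentBracket_T (μ ^ 2) l m n).symm
  obtain rfl : g = laurentBracket 1 :=
    trilinearMap_ext_T fun l m n => by
      simp only [hg, laurentBracket_T, one_zpow, Units.val_one, one_mul]
  refine ⟨scaleHom_bijective μ, fun x y z => ?_⟩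
  simpa only [mul_one, AlgHom.toLinearMap_apply] using scaleHom_laurentBracket μ 1 x y z

/-- For char F ≠ 2 and `μ ≠ 0` with `μ² = λ`, the linear map
`σ(t^m) = μ^m t^m` is a bijection intertwining the bracket `[·,·,·]_{ω_λ,δ}` with the
bracket `[·,·,·]_{ω_1,δ}`; hence the two 3-Lie algebras are isomorphic. -/
theorem stmt_15 (F : Type*) [Field F] (h2 : (2 : F) ≠ 0)
    (lam μ : F) (hμ : μ ≠ 0) (hμsq : μ ^ 2 = lam)
    (f : LaurentPolynomial F →ₗ[F] LaurentPolynomial F →ₗ[F] LaurentPolynomial F →ₗ[F]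
      LaurentPolynomial F)
    (hf : ∀ l m n : ℤ, f (T l) (T m) (T n) =
      (lam ^ l * ((n : F) - (m : F))) • (T (m + n - l) : LaurentPolynomial F) +
      (lam ^ m * ((l : F) - (n : F))) • (T (n + l - m) : LaurentPolynomial F) +
      (lam ^ n * ((m : F) - (l : F))) • (T (l + m - n) : LaurentPolynomial F))
    (g : LaurentPolynomial F →ₗ[F] LaurentPolynomial F →ₗ[F] LaurentPolynomial F →ₗ[F]
      LaurentPolynomial F)
    (hg : ∀ l m n : ℤ, g (T l) (T m) (T n) =
      ((n : F) - (m : F)) • (T (m + n - l) : LaurentPolynomial F) +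
      ((l : F) - (n : F)) • (T (n + l - m) : LaurentPolynomial F) +
      ((m : F) - (l : F)) • (T (l + m - n) : LaurentPolynomial F))
    (σ : LaurentPolynomial F →ₗ[F] LaurentPolynomial F)
    (hσ : ∀ m : ℤ, σ (T m) = μ ^ m • (T m : LaurentPolynomial F)) :
    Function.Bijective σ ∧
    (∀ x y z : LaurentPolynomial F, σ (f x y z) = g (σ x) (σ y) (σ z)) := by
  obtain ⟨u, rfl⟩ := hμ.isUnit
  subst hμsq
  exact stmt_15_general u f (by simpa using hf) g hg σ (by simpa using hσ)
end
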